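/- If the sequence (a_k)_{k≥1} is nonincreasing, then the sequence k ↦ a_k(k) is nondecreasing, and for all k ≥ 1 one has the uniform bound a_k(k) ≤ (1 + max_i a_i)/(1 − Σ_{i≥1} a_i). -/

import Mathlib

/-!
Write `d k` for `a_k(k)`. Since `d 0 = 1`, the recursion is the renewal equation `d = 1 + a ∗ d`.
Passing from `n` to `n + 1` replaces each value on the right by its successor and adds one
nonnegative term, so `d` increases. Since `M = 1 / (1 - Σ a_i)` satisfies
`1 + (Σ a_i) M = M`, the bound `d ≤ M` propagates through the equation.
-/

open Finset

/-- `u` solves the discrete renewal equation `u = f + a ∗ u` with forcing term `f`, where `a k` is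
the weight of the lag `k ≥ 1`. Each past index `n - (i + 1)` is an untruncated difference. -/
def IsRenewalSolution {R : Type*} [Semiring R] (a f u : ℕ → R) : Prop :=
  ∀ n, u n = f n + ∑ i ∈ range n, a (i + 1) * u (n - (i + 1))

namespace IsRenewalSolution

theorem apply_zero {R : Type*} [Semiring R] {a f u : ℕ → R} (h : IsRenewalSolution a f u) :
    u 0 = f 0 := by
  simpa using h 0

theorem monotone {R : Type*} [Semiring R] [PartialOrder R] [IsOrderedRing R] {a f u : ℕ → R}
    (h : IsRenewalSolution a f u) (ha : ∀ i, 0 ≤ a (i + 1)) (hf : Monotone f) (hf₀ : 0 ≤ f 0) :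
    Monotone u := by
  refine monotone_nat_of_le_succ fun n => ?_
  induction n using Nat.strong_induction_on with
  | _ n ih =>
    have hshift : ∀ i ∈ range n, u (n - (i + 1)) ≤ u (n + 1 - (i + 1)) := fun i hi => by
      have hi : i < n := mem_range.mp hi
      simpa only [show n - (i + 1) + 1 = n + 1 - (i + 1) by lia] using ih (n - (i + 1)) (by lia)
    have hnew : 0 ≤ a (n + 1) * u (n + 1 - (n + 1)) := by
      rw [Nat.sub_self, h.apply_zero]
      exact mul_nonneg (ha n) hf₀
    calc u n = f n + ∑ i ∈ range n, a (i + 1) * u (n - (i + 1)) := h n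
      _ ≤ f (n + 1) + ∑ i ∈ range n, a (i + 1) * u (n + 1 - (i + 1)) :=
        add_le_add (hf n.le_succ) <|
          sum_le_sum fun i hi => mul_le_mul_of_nonneg_left (hshift i hi) (ha i)
      _ ≤ f (n + 1) + ∑ i ∈ range (n + 1), a (i + 1) * u (n + 1 - (i + 1)) := by
        rw [sum_range_succ]
        exact add_le_add_right (le_add_of_nonneg_right hnew) _
      _ = u (n + 1) := (h (n + 1)).symm

theorem le_div_one_sub {K : Type*} [Field K] [LinearOrder K] [IsStrictOrderedRing K]
    {a f u : ℕ → K} {c s : K} (h : IsRenewalSolution a f u) (ha : ∀ i, 0 ≤ a (i + 1))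
    (hs : ∀ n, ∑ i ∈ range n, a (i + 1) ≤ s) (hs₁ : s < 1) (hc : 0 ≤ c) (hf : ∀ n, f n ≤ c)
    (n : ℕ) : u n ≤ c / (1 - s) := by
  have hpos : 0 < 1 - s := sub_pos.mpr hs₁
  have hbound : 0 ≤ c / (1 - s) := div_nonneg hc hpos.le
  induction n using Nat.strong_induction_on with
  | _ n ih =>
    calc u n = f n + ∑ i ∈ range n, a (i + 1) * u (n - (i + 1)) := h n
      _ ≤ c + ∑ i ∈ range n, a (i + 1) * (c / (1 - s)) :=
        add_le_add (hf n) <| sum_le_sum fun i hi =>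
          mul_le_mul_of_nonneg_left (ih _ (by have := mem_range.mp hi; lia)) (ha i)
      _ = c + (∑ i ∈ range n, a (i + 1)) * (c / (1 - s)) := by rw [sum_mul]
      _ ≤ c + s * (c / (1 - s)) :=
        add_le_add_right (mul_le_mul_of_nonneg_right (hs n) hbound) c
      _ = c / (1 - s) := by
        field_simp [hpos.ne']
        ring

end IsRenewalSolution

theorem isRenewalSolution_one_of_diagonal_rec {R : Type*} [CommSemiring R] {a d : ℕ → R}
    (hd0 : d 0 = 1) (hd1 : d 1 = 1 + a 1)
    (hdrec : ∀ k, 2 ≤ k → d k = 1 + a k + ∑ l ∈ Ico 1 k, d l * a (k - l)) :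
    IsRenewalSolution a 1 d := by
  have hsucc : ∀ n, d (n + 1) = 1 + a (n + 1) + ∑ l ∈ Ico 1 (n + 1), d l * a (n + 1 - l)
    | 0 => by simpa using hd1
    | n + 1 => hdrec (n + 2) (by lia)
  rintro (_ | n)
  · simpa using hd0
  calc d (n + 1) = 1 + (d 0 * a (n + 1 - 0) + ∑ l ∈ Ico 1 (n + 1), d l * a (n + 1 - l)) := by
        rw [hsucc, hd0, one_mul, Nat.sub_zero, add_assoc]
    _ = 1 + ∑ l ∈ range (n + 1), d l * a (n + 1 - l) := by
        rw [range_eq_Ico, sum_eq_sum_Ico_succ_bot n.succ_pos]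
    _ = 1 + ∑ i ∈ range (n + 1), a (i + 1) * d (n + 1 - (i + 1)) := by
        rw [← sum_range_reflect]
        refine congrArg (1 + ·) (sum_congr rfl fun i hi => ?_)
        have hi : i < n + 1 := mem_range.mp hi
        rw [mul_comm, show n + 1 - (n + 1 - 1 - i) = i + 1 by lia,
          show n + 1 - 1 - i = n + 1 - (i + 1) by lia]

theorem diagonal_coefficients_monotone_and_bounded_general {a d : ℕ → ℝ}
    (ha : ∀ i, 0 ≤ a (i + 1)) (haSum : Summable fun i => a (i + 1))
    (haLt : ∑' i, a (i + 1) < 1) (hd0 : d 0 = 1) (hd1 : d 1 = 1 + a 1)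
    (hdrec : ∀ k, 2 ≤ k → d k = 1 + a k + ∑ l ∈ Ico 1 k, d l * a (k - l)) :
    Monotone d ∧ ∀ k, d k ≤ 1 / (1 - ∑' i, a (i + 1)) := by
  have hd : IsRenewalSolution a 1 d := isRenewalSolution_one_of_diagonal_rec hd0 hd1 hdrec
  have hpartial (n : ℕ) : ∑ i ∈ range n, a (i + 1) ≤ ∑' i, a (i + 1) :=
    haSum.sum_le_tsum _ fun i _ => ha i
  exact ⟨hd.monotone ha monotone_const zero_le_one,
    hd.le_div_one_sub ha hpartial haLt zero_le_one fun _ => le_rfl⟩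

/-- If the sequence `(a_k)_{k≥1}` is nonincreasing, then the diagonal
coefficients `a_k(k)` (defined by `a_0(0)=1`, `a_1(1)=1+a_1` and, for `k ≥ 2`,
`a_k(k) = 1 + a_k + Σ_{l=1}^{k−1} a_l(l)·a_{k−l}`) form a nondecreasing sequence in `k`,
and for all `k ≥ 1` one has `a_k(k) ≤ (1 + max_i a_i)/(1 − Σ_{i≥1} a_i)`. -/
theorem diagonal_coefficients_monotone_and_bounded
    (a : ℕ → ℝ) (ha : ∀ i, 0 ≤ a (i + 1))
    (haSum : Summable fun i => a (i + 1)) (haLt : ∑' i, a (i + 1) < 1)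
    (haMono : ∀ k, 1 ≤ k → a (k + 1) ≤ a k)
    (d : ℕ → ℝ)
    (hd0 : d 0 = 1)
    (hd1 : d 1 = 1 + a 1)
    (hdrec : ∀ k, 2 ≤ k → d k = 1 + a k + ∑ l ∈ Finset.Ico 1 k, d l * a (k - l)) :
    (∀ j k, j ≤ k → d j ≤ d k) ∧
      (∀ k, 1 ≤ k → d k ≤ (1 + ⨆ i : ℕ, a (i + 1)) / (1 - ∑' i, a (i + 1))) := by
  have ⟨hmono, hle⟩ :=
    diagonal_coefficients_monotone_and_bounded_general ha haSum haLt hd0 hd1 hdrec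
  exact ⟨fun _ _ hjk => hmono hjk, fun k _ => (hle k).trans <| div_le_div_of_nonneg_right
    (le_add_of_nonneg_right (Real.iSup_nonneg ha)) (sub_pos.mpr haLt).le⟩
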